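/- arXiv:2012.04705 — 6 statements merged into one kernel-verified Lean document; each statement's English description precedes it below -/
import Mathlib

section
/- Let i ≥ 1, L ≥ 1 and nonnegative integers a_1,…,a_i with a_i ≥ a_j for all j ∈ [i] be given, and set K = (i−1)L + Σ_{j=1}^{i} a_j + 1. Then the optimal broadcast rate R* of the (a_i,…,a_1)_L-bar-ICP satisfies R* ≤ min{ 2(K−(i−1)L) + i − 2 − a_i , K }. -/
open Finset

/-- `<m>_n`: the unique element of `{1,…,n}` congruent to `m` modulo `n`. -/
def angMod (m : ℤ) (n : ℕ) : ℕ :=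
  if m % (n : ℤ) = 0 then n else (m % (n : ℤ)).toNat

/-- Message indices of the bar-ICP: pairs in `[K] × [i]`. -/
abbrev Msg (K i : ℕ) : Type :=
  {p : ℕ × ℕ // p.1 ∈ Finset.Icc 1 K ∧ p.2 ∈ Finset.Icc 1 i}

/-- Users of the bar-ICP: elements of `[K]`. -/
abbrev User (K : ℕ) : Type := {k : ℕ // k ∈ Finset.Icc 1 K}

/-- The side-information index set `K_k` of user `k` in the
`(a_i,…,a_1)_L`-bar-ICP, as a set of pairs `(b,t)`. -/
def knownIdx (K i L : ℕ) (a : ℕ → ℕ) (k : ℕ) : Set (ℕ × ℕ) :=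
  {p | ∃ t ∈ Finset.Icc 1 i, ∃ v ∈ Finset.Icc 1 (i - 1), ∃ r ∈ Finset.Icc 1 L,
    p.2 = t ∧
    p.1 = angMod ((k : ℤ) + (∑ j ∈ Finset.Icc 1 v, (a (angMod ((i : ℤ) + (t : ℤ) - (j : ℤ)) i) : ℤ))
        + ((v : ℤ) - 1) * (L : ℤ) + (r : ℤ)) K}

/-- Want set of user `u` in the bar-ICP: the messages `(u,t)`, `t ∈ [i]`. -/
def barWant (K i : ℕ) (u : User K) : Set (Msg K i) :=
  {p | p.1.1 = u.1}

/-- Known set of user `u` in the bar-ICP. -/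
def barKnown (K i L : ℕ) (a : ℕ → ℕ) (u : User K) : Set (Msg K i) :=
  {p | p.1 ∈ knownIdx K i L a u.1}

/-- A valid index code of length `ℓ` for message length `t` for the index coding
problem with message index set `I`, users `U`, want sets `W` and known sets `Kn`. -/
def ValidCode {I U : Type} (W Kn : U → Set I) (t ℓ : ℕ) : Prop :=
  ∃ E : (I → Fin t → Bool) → Fin ℓ → Bool,
  ∃ D : ∀ u : U, (Fin ℓ → Bool) → (↥(Kn u) → Fin t → Bool) → (↥(W u) → Fin t → Bool),
    ∀ x : I → Fin t → Bool, ∀ u : U,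
      D u (E x) (fun m => x m.1) = fun m => x m.1

/-- The optimal broadcast rate of an index coding problem. -/
noncomputable def optRate {I U : Type} (W Kn : U → Set I) : ℝ :=
  sInf {ρ : ℝ | ∃ t ℓ : ℕ, 1 ≤ t ∧ ValidCode W Kn t ℓ ∧ ρ = (ℓ : ℝ) / (t : ℝ)}

/-- Shift `s_u = a_1 + … + a_{u-1} + (u-1) L`. -/
def shiftN (L : ℕ) (a : ℕ → ℕ) (u : ℕ) : ℕ := (∑ j ∈ Finset.Ico 1 u, a j) + (u - 1) * L

lemma shiftN_succ (L : ℕ) (a : ℕ → ℕ) (u : ℕ) (hu : 1 ≤ u) :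
    shiftN L a (u + 1) = shiftN L a u + a u + L := by
  unfold shiftN
  rw [Finset.sum_Ico_succ_top hu]
  obtain ⟨w, rfl⟩ : ∃ w, u = w + 1 := ⟨u - 1, by omega⟩
  simp only [Nat.add_sub_cancel]
  ring

lemma angMod_mem (z : ℤ) (n : ℕ) (hn : 1 ≤ n) : angMod z n ∈ Finset.Icc 1 n := by
  unfold angMod
  have h1 := Int.emod_nonneg z (b := (n : ℤ)) (by omega)
  have h2 := Int.emod_lt_of_pos z (b := (n : ℤ)) (by omega)
  split_ifs with h <;> simp only [Finset.mem_Icc] <;> omega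

lemma angMod_congr {z z' : ℤ} {n : ℕ} (h : z % (n : ℤ) = z' % (n : ℤ)) :
    angMod z n = angMod z' n := by
  unfold angMod
  rw [h]

lemma angMod_self (k n : ℕ) (hk : k ∈ Finset.Icc 1 n) : angMod (k : ℤ) n = k := by
  rw [Finset.mem_Icc] at hk
  unfold angMod
  rcases Nat.lt_or_ge k n with h | h
  · have : (k : ℤ) % (n : ℤ) = k := Int.emod_eq_of_lt (by omega) (by omega)
    rw [this]
    split_ifs <;> omega
  · have : k = n := by omega
    subst this
    simp

lemma sum_lt (i : ℕ) (a : ℕ → ℕ) (u t : ℕ) (ht : 1 ≤ t) (htu : t < u) (hu : u ≤ i) :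
    ∑ j ∈ Finset.Icc 1 (u - t), (a (angMod ((i : ℤ) + (u : ℤ) - (j : ℤ)) i) : ℤ)
      = ∑ j ∈ Finset.Ico t u, (a j : ℤ) := by
  refine Finset.sum_bij' (fun j _ => u - j) (fun j _ => u - j) ?_ ?_ ?_ ?_ ?_
  · intro j hj; simp only [Finset.mem_Icc, Finset.mem_Ico] at *; omega
  · intro j hj; simp only [Finset.mem_Icc, Finset.mem_Ico] at *; omega
  · intro j hj; simp only [Finset.mem_Icc, Finset.mem_Ico] at *; omega
  · intro j hj; simp only [Finset.mem_Icc, Finset.mem_Ico] at *; omega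
  · intro j hj
    simp only [Finset.mem_Icc] at hj
    have : angMod ((i : ℤ) + (u : ℤ) - (j : ℤ)) i = u - j := by
      rw [← angMod_self (u - j) i (by rw [Finset.mem_Icc]; omega)]
      apply angMod_congr
      rw [show (i : ℤ) + (u : ℤ) - (j : ℤ) = ((u - j : ℕ) : ℤ) + i by omega]
      simp
    rw [this]

lemma sum_gt (i : ℕ) (a : ℕ → ℕ) (u t : ℕ) (hu : 1 ≤ u) (htu : u < t) (ht : t ≤ i) :
    ∑ j ∈ Finset.Icc 1 (u + i - t), (a (angMod ((i : ℤ) + (u : ℤ) - (j : ℤ)) i) : ℤ)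
      = ∑ j ∈ Finset.Ico 1 u, (a j : ℤ) + ∑ j ∈ Finset.Ico t (i + 1), (a j : ℤ) := by
  have hd : Disjoint (Finset.Ico 1 u) (Finset.Ico t (i + 1)) := by
    rw [Finset.disjoint_left]
    intro j; simp only [Finset.mem_Ico]; omega
  rw [← Finset.sum_union hd]
  refine Finset.sum_bij' (fun j _ => if j < u then u - j else u + i - j)
    (fun j _ => if j < u then u - j else u + i - j) ?_ ?_ ?_ ?_ ?_
  · intro j hj; simp only [Finset.mem_Icc, Finset.mem_Ico, Finset.mem_union] at *
    split_ifs <;> omega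
  · intro j hj; simp only [Finset.mem_Icc, Finset.mem_Ico, Finset.mem_union] at *
    split_ifs <;> omega
  · intro j hj; simp only [Finset.mem_Icc, Finset.mem_Ico, Finset.mem_union] at *
    split_ifs <;> omega
  · intro j hj; simp only [Finset.mem_Icc, Finset.mem_Ico, Finset.mem_union] at *
    split_ifs <;> omega
  · intro j hj
    simp only [Finset.mem_Icc] at hj
    have : angMod ((i : ℤ) + (u : ℤ) - (j : ℤ)) i = if j < u then u - j else u + i - j := by
      split_ifs with h
      · rw [← angMod_self (u - j) i (by rw [Finset.mem_Icc]; omega)]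
        apply angMod_congr
        rw [show (i : ℤ) + (u : ℤ) - (j : ℤ) = ((u - j : ℕ) : ℤ) + i by omega]
        simp
      · rw [← angMod_self (u + i - j) i (by rw [Finset.mem_Icc]; omega)]
        apply angMod_congr
        rw [show (i : ℤ) + (u : ℤ) - (j : ℤ) = ((u + i - j : ℕ) : ℤ) by omega]
    rw [this]

/-- Vandermonde (MDS) argument: a vector killed by the first `M` power sums whose support has at most
`M` elements vanishes. -/
lemma vand {F : Type*} [Field F] {K : ℕ} (α : Fin K → F) (hα : Function.Injective α)
    (y : Fin K → F) (M : ℕ) (S : Finset (Fin K)) (hS : ∀ m, m ∉ S → y m = 0) (hc : S.card ≤ M)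
    (h : ∀ j < M, ∑ m, y m * α m ^ j = 0) : ∀ m, y m = 0 := by
  let e := S.equivFin.symm
  have key : (fun q : Fin S.card => y (e q)) = 0 := by
    apply Matrix.eq_zero_of_forall_pow_sum_mul_pow_eq_zero (f := fun q => α (e q))
    · intro p q hpq
      exact e.injective (Subtype.ext (hα hpq))
    · intro j
      have h1 := h j (lt_of_lt_of_le j.2 hc)
      rw [← Finset.sum_subset (Finset.subset_univ S)
        (fun m _ hm => by rw [hS m hm, zero_mul])] at h1
      rw [← Finset.sum_coe_sort] at h1
      rw [← h1]
      exact Equiv.sum_comp e (fun m : S => y m * α m ^ (j : ℕ))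
  intro m
  by_cases hm : m ∈ S
  · have := congrFun key (S.equivFin ⟨m, hm⟩)
    simpa [e] using this
  · exact hS m hm

lemma exists_cell (L : ℕ) (a : ℕ → ℕ) (i : ℕ) (hi : 1 ≤ i) (d : ℕ) (hd : d < shiftN L a i) :
    ∃ t, 1 ≤ t ∧ t < i ∧ shiftN L a t ≤ d ∧ d < shiftN L a (t + 1) := by
  induction i, hi using Nat.le_induction with
  | base => simp [shiftN] at hd
  | succ n hn ih =>
    by_cases h : d < shiftN L a n
    · obtain ⟨t, h1, h2, h3, h4⟩ := ih h
      exact ⟨t, h1, by omega, h3, h4⟩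
    · exact ⟨n, hn, by omega, by omega, hd⟩

/-- Offsets which are possibly unknown. -/
def badSet (i L : ℕ) (a : ℕ → ℕ) : Finset ℕ :=
  ((Finset.Ico 1 i).biUnion (fun t =>
    Finset.Ico (shiftN L a t) (shiftN L a t + (a t + 1)) ∪
    Finset.Ico (shiftN L a t + L) (shiftN L a t + L + a t))) ∪
  Finset.Ico (shiftN L a i) (shiftN L a i + (a i + 1))

lemma badSet_card (i L : ℕ) (a : ℕ → ℕ) (hi : 1 ≤ i) :
    (badSet i L a).card + a i ≤ 2 * (∑ j ∈ Finset.Icc 1 i, a j) + i := by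
  have h1 : ((Finset.Ico 1 i).biUnion (fun t =>
    Finset.Ico (shiftN L a t) (shiftN L a t + (a t + 1)) ∪
    Finset.Ico (shiftN L a t + L) (shiftN L a t + L + a t))).card
      ≤ ∑ t ∈ Finset.Ico 1 i, (2 * a t + 1) := by
    refine Finset.card_biUnion_le.trans (Finset.sum_le_sum fun t _ => ?_)
    refine (Finset.card_union_le _ _).trans ?_
    simp only [Nat.card_Ico]
    omega
  have h2 : (badSet i L a).card ≤ _ := Finset.card_union_le _ _
  have h3 : ∑ j ∈ Finset.Icc 1 i, a j = ∑ j ∈ Finset.Ico 1 i, a j + a i := by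
    rw [← Finset.sum_Ico_succ_top hi]; rfl
  rw [Finset.sum_add_distrib, ← Finset.mul_sum] at h1
  simp at h1 h2
  omega

section core
variable {F : Type*} [Field F]

lemma core (i L : ℕ) (hi : 1 ≤ i) (hL : 1 ≤ L) (a : ℕ → ℕ) (K : ℕ)
    (hK : K = (i - 1) * L + (∑ j ∈ Finset.Icc 1 i, a j) + 1)
    (Z : ℤ → ℕ → F) (hZ : ∀ z z' : ℤ, ∀ t, z % (K : ℤ) = z' % (K : ℤ) → Z z t = Z z' t) (k : ℤ)
    (h : ∀ t ∈ Finset.Icc 1 i, ∀ v ∈ Finset.Icc 1 (i - 1), ∀ r ∈ Finset.Icc 1 L,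
      Z (k + (∑ j ∈ Finset.Icc 1 v, (a (angMod ((i : ℤ) + (t : ℤ) - (j : ℤ)) i) : ℤ))
        + ((v : ℤ) - 1) * (L : ℤ) + (r : ℤ)) t = 0)
    (α : Fin K → F) (hα : Function.Injective α) (M : ℕ)
    (hM : M = min (2 * (∑ j ∈ Finset.Icc 1 i, a j) + i - a i) K)
    (hE : ∀ j < M, ∑ m : Fin K,
      (∑ u ∈ Finset.Icc 1 i, Z (((m : ℕ) : ℤ) + shiftN L a u) u) * α m ^ j = 0) :
    ∀ t ∈ Finset.Icc 1 i, Z k t = 0 := by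
  have hA : ∑ j ∈ Finset.Icc 1 i, a j = ∑ j ∈ Finset.Ico 1 (i + 1), a j := rfl
  have hlt : ∀ u t q : ℕ, 1 ≤ t → t < u → u ≤ i → q < L →
      Z (k + shiftN L a u - shiftN L a t - q) u = 0 := by
    intro u t q ht htu hu hq
    have := h u (by simp; omega) (u - t) (by simp; omega) (L - q) (by simp; omega)
    rw [sum_lt i a u t ht htu hu] at this
    rw [← this]
    congr 1
    unfold shiftN
    rw [← Finset.sum_Ico_consecutive a ht htu.le]
    push_cast [Nat.cast_sub htu.le, Nat.cast_sub hq.le, Nat.cast_sub ht,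
      Nat.cast_sub (ht.trans htu.le)]
    ring
  have hgt : ∀ u t q : ℕ, 1 ≤ u → u < t → t ≤ i → q < L →
      Z (k + shiftN L a u - shiftN L a t + q) u = 0 := by
    intro u t q hu htu ht hq
    have := h u (by simp; omega) (u + i - t) (by simp; omega) (q + 1) (by simp; omega)
    rw [sum_gt i a u t hu htu ht] at this
    rw [← this]
    apply hZ
    rw [← Int.add_emod_right]
    congr 1
    rw [hK, hA, ← Finset.sum_Ico_consecutive a (hu.trans htu.le) (by omega : t ≤ i + 1)]
    unfold shiftN
    push_cast [Nat.cast_sub (show t ≤ u + i by omega), Nat.cast_sub hu, Nat.cast_sub hi,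
      Nat.cast_sub (hu.trans htu.le)]
    ring
  set Y : ℤ → F := fun m => ∑ u ∈ Finset.Icc 1 i, Z (m + shiftN L a u) u with hY
  have hYper : ∀ z z' : ℤ, z % (K : ℤ) = z' % (K : ℤ) → Y z = Y z' := by
    intro z z' hz
    refine Finset.sum_congr rfl fun u _ => hZ _ _ _ ?_
    exact Int.ModEq.add_right _ hz
  have hK0 : 0 < K := by omega
  have hsi : shiftN L a i + (a i + 1) = K := by
    rw [hK, hA, Finset.sum_Ico_succ_top hi]
    unfold shiftN
    ring
  have hgood : ∀ d : ℕ, d < K → d ∉ badSet i L a → Y (k - d) = 0 := by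
    intro d hd hb
    unfold badSet at hb
    simp only [Finset.mem_union, Finset.mem_biUnion, Finset.mem_Ico, not_or, not_exists,
      not_and] at hb
    obtain ⟨hb1, hb2⟩ := hb
    have hd' : d < shiftN L a i := by omega
    obtain ⟨t, ht1, ht2, ht3, ht4⟩ := exists_cell L a i hi d hd'
    obtain ⟨hc1, hc2⟩ := hb1 t ⟨ht1, ht2⟩
    have hs := shiftN_succ L a t ht1
    refine Finset.sum_eq_zero fun u hu => ?_
    rw [Finset.mem_Icc] at hu
    rcases Nat.lt_or_ge t u with htu | htu
    · rw [← hlt u t (d - shiftN L a t) ht1 htu hu.2 (by omega)]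
      congr 1
      omega
    · rw [← hgt u (t + 1) (shiftN L a (t + 1) - d) hu.1 (by omega) (by omega) (by omega)]
      congr 1
      omega
  have hYz : ∀ m : Fin K, Y ((m : ℕ) : ℤ) = 0 := by
    let g : ℕ → Fin K := fun d => ⟨((k - d) % (K : ℤ)).toNat, by
      have h1 := Int.emod_nonneg (k - d) (b := (K : ℤ)) (by omega)
      have h2 := Int.emod_lt_of_pos (k - d) (b := (K : ℤ)) (by omega)
      omega⟩
    have hg : ∀ m : Fin K, ∃ d, d < K ∧ g d = m ∧ (k - d) % (K : ℤ) = ((m : ℕ) : ℤ) % (K : ℤ) := by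
      intro m
      have h1 := Int.emod_nonneg (k - m) (b := (K : ℤ)) (by omega)
      have h2 := Int.emod_lt_of_pos (k - m) (b := (K : ℤ)) (by omega)
      have h3 : (k - (((k - m) % (K : ℤ)).toNat : ℤ)) % (K : ℤ) = ((m : ℕ) : ℤ) % (K : ℤ) := by
        rw [Int.toNat_of_nonneg h1]
        rw [Int.sub_emod, Int.emod_emod, ← Int.sub_emod]
        congr 1
        ring
      refine ⟨((k - m) % (K : ℤ)).toNat, by omega, ?_, h3⟩
      apply Fin.ext
      simp only [g]
      rw [h3, Int.emod_eq_of_lt (by omega) (by have := m.2; omega)]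
      simp
    refine vand α hα (fun m => Y ((m : ℕ) : ℤ)) M
      (Finset.univ.filter fun m : Fin K => m ∈ (badSet i L a).image g) ?_ ?_ hE
    · intro m hm
      obtain ⟨d, hd1, hd2, hd3⟩ := hg m
      have hdb : d ∉ badSet i L a := by
        intro hd
        apply hm
        simp only [Finset.mem_filter, Finset.mem_univ, true_and]
        rw [← hd2]
        exact Finset.mem_image_of_mem g hd
      change Y _ = 0
      rw [← hYper _ _ hd3]
      exact hgood d hd1 hdb
    · rw [hM]
      apply le_min
      · have h1 : (Finset.univ.filter fun m : Fin K => m ∈ (badSet i L a).image g)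
            = (badSet i L a).image g := by ext; simp
        rw [h1]
        have h2 := Finset.card_image_le (s := badSet i L a) (f := g)
        have h3 := badSet_card i L a hi
        omega
      · exact (Finset.card_le_univ _).trans (by simp)
  have hYall : ∀ z : ℤ, Y z = 0 := by
    intro z
    have h1 := Int.emod_nonneg z (b := (K : ℤ)) (by omega)
    have h2 := Int.emod_lt_of_pos z (b := (K : ℤ)) (by omega)
    rw [← hYz ⟨(z % (K : ℤ)).toNat, by omega⟩]
    apply hYper
    simp only
    rw [Int.toNat_of_nonneg h1, Int.emod_emod]
  intro t ht
  have h1 := hYall (k - shiftN L a t)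
  simp only [hY] at h1
  rw [Finset.sum_eq_single t] at h1
  · rw [← h1]; congr 1; ring
  · intro u hu hut
    rw [Finset.mem_Icc] at hu ht
    rcases Nat.lt_or_ge t u with htu | htu
    · rw [← hlt u t 0 ht.1 htu hu.2 hL]
      congr 1; push_cast; ring
    · rw [← hgt u t 0 hu.1 (by omega) ht.2 hL]
      congr 1; push_cast; ring
  · intro hn; exact absurd ht hn

end core

lemma validCode_of_inj {I U : Type} (W Kn : U → Set I) (t l : ℕ)
    (E : (I → Fin t → Bool) → Fin l → Bool)
    (hE : ∀ x x' : I → Fin t → Bool, ∀ u : U, E x = E x' → (∀ m ∈ Kn u, x m = x' m) →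
      ∀ m ∈ W u, x m = x' m) : ValidCode W Kn t l := by
  classical
  refine ⟨E, fun u c s => if h : ∃ x, E x = c ∧ (fun m : Kn u => x m.1) = s then
    fun m => h.choose m.1 else fun _ _ => false, ?_⟩
  intro x u
  have h : ∃ x', E x' = E x ∧ (fun m : Kn u => x' m.1) = (fun m : Kn u => x m.1) := ⟨x, rfl, rfl⟩
  refine (dif_pos h).trans ?_
  funext m
  exact hE _ _ u h.choose_spec.1 (fun m hm => congrFun h.choose_spec.2 ⟨m, hm⟩) m.1 m.2

lemma main_code (i L : ℕ) (hi : 1 ≤ i) (hL : 1 ≤ L) (a : ℕ → ℕ)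
    (K : ℕ) (hK : K = (i - 1) * L + (∑ j ∈ Finset.Icc 1 i, a j) + 1) (M : ℕ)
    (hM : M = min (2 * (∑ j ∈ Finset.Icc 1 i, a j) + i - a i) K) :
    ValidCode (barWant K i) (barKnown K i L a) K (M * K) := by
  classical
  have hK0 : 1 ≤ K := by omega
  haveI : Fact (Nat.Prime 2) := ⟨Nat.prime_two⟩
  let F := GaloisField 2 K
  haveI : Fintype F := Fintype.ofFinite F
  have hF : Fintype.card F = 2 ^ K := by
    rw [← Nat.card_eq_fintype_card]; exact GaloisField.card 2 K (by omega)
  have e : (Fin K → Bool) ≃ F := Fintype.equivOfCardEq (by rw [hF]; simp)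
  obtain ⟨α⟩ : Nonempty (Fin K ↪ F) := Function.Embedding.nonempty_of_card_le (by
    rw [hF, Fintype.card_fin]; exact Nat.lt_two_pow_self.le)
  let X : (Msg K i → Fin K → Bool) → ℤ → ℕ → F := fun x z t =>
    if ht : t ∈ Finset.Icc 1 i then e (x ⟨(angMod z K, t), angMod_mem z K hK0, ht⟩) else 0
  let C : (Msg K i → Fin K → Bool) → Fin M → F := fun x j =>
    ∑ m : Fin K, (∑ u ∈ Finset.Icc 1 i, X x (((m : ℕ) : ℤ) + shiftN L a u) u) * α m ^ (j : ℕ)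
  refine validCode_of_inj _ _ _ _ (fun x p => e.symm (C x (finProdFinEquiv.symm p).1)
    (finProdFinEquiv.symm p).2) ?_
  intro x x' u hE hk m hm
  have hC : ∀ j, C x j = C x' j := by
    intro j
    apply e.symm.injective
    funext b
    have := congrFun hE (finProdFinEquiv (j, b))
    simpa using this
  obtain ⟨⟨k, t⟩, hk1, ht1⟩ := m
  have hku : k = u.1 := hm
  have hXper : ∀ x, ∀ z z' : ℤ, ∀ t, z % (K : ℤ) = z' % (K : ℤ) → X x z t = X x z' t := by
    intro x z z' t hz
    simp only [X, angMod_congr hz]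
  have key := core i L hi hL a K hK (fun z t => X x z t - X x' z t)
    (fun z z' t hz => by simp only [hXper _ z z' t hz]) (k : ℤ) ?_ α α.injective M hM ?_ t ht1
  · have h2 : X x k t = X x' k t := sub_eq_zero.mp key
    have h3 := angMod_self k K hk1
    simp only [X, dif_pos ht1] at h2
    have h4 := e.injective h2
    simpa only [h3] using h4
  · intro t ht v hv r hr
    simp only [X, dif_pos ht]
    rw [sub_eq_zero]
    congr 1
    apply hk
    refine ⟨t, ht, v, hv, r, hr, rfl, ?_⟩
    simp only [hku]
  · intro j hj
    have := hC ⟨j, hj⟩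
    simp only [C] at this
    rw [← sub_eq_zero, ← Finset.sum_sub_distrib] at this
    rw [← this]
    refine Finset.sum_congr rfl fun m _ => ?_
    rw [Finset.sum_sub_distrib, sub_mul]

/-- Theorem 1 of the paper: upper bound on the optimal broadcast
rate of the `(a_i,…,a_1)_L`-bar-ICP. -/
theorem stmt0 (i L : ℕ) (hi : 1 ≤ i) (hL : 1 ≤ L) (a : ℕ → ℕ)
    (hmax : ∀ j ∈ Finset.Icc 1 i, a j ≤ a i)
    (K : ℕ) (hK : K = (i - 1) * L + (∑ j ∈ Finset.Icc 1 i, a j) + 1) :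
    optRate (barWant K i) (barKnown K i L a) ≤
      min (2 * ((K : ℝ) - ((i : ℝ) - 1) * (L : ℝ)) + (i : ℝ) - 2 - (a i : ℝ)) (K : ℝ) := by
  have hai : a i ≤ ∑ j ∈ Finset.Icc 1 i, a j :=
    Finset.single_le_sum (f := a) (fun _ _ => Nat.zero_le _) (by simp; omega)
  obtain ⟨M, hM⟩ : ∃ M, M = min (2 * (∑ j ∈ Finset.Icc 1 i, a j) + i - a i) K := ⟨_, rfl⟩
  have hv := main_code i L hi hL a K hK M hM
  have hK0 : 1 ≤ K := by omega
  have hKr : (K : ℝ) ≠ 0 := by positivity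
  have h1 : optRate (barWant K i) (barKnown K i L a) ≤ (M : ℝ) := by
    apply csInf_le
    · refine ⟨0, ?_⟩
      rintro ρ ⟨t, l, _, _, rfl⟩
      positivity
    · refine ⟨K, M * K, hK0, hv, ?_⟩
      push_cast
      field_simp
  refine h1.trans (le_min ?_ ?_)
  · have h2 : M + a i ≤ 2 * (∑ j ∈ Finset.Icc 1 i, a j) + i := by
      have := hM.le.trans (min_le_left _ _)
      omega
    have h3 : (M : ℝ) + a i ≤ 2 * ((∑ j ∈ Finset.Icc 1 i, a j : ℕ) : ℝ) + i := by
      exact_mod_cast h2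
    have h4 : (K : ℝ) = ((i : ℝ) - 1) * L + ((∑ j ∈ Finset.Icc 1 i, a j : ℕ) : ℝ) + 1 := by
      rw [hK, Nat.cast_add, Nat.cast_add, Nat.cast_mul, Nat.cast_sub hi, Nat.cast_one]
    rw [h4]
    linarith
  · exact_mod_cast hM.le.trans (min_le_right _ _)
end

section
/- Let i ≥ 1, L ≥ 1 and nonnegative integers a_1,…,a_i be given, and set K = (i−1)L + Σ_{j=1}^{i} a_j + 1. Then the optimal broadcast rate R* of the (a_i,…,a_1)_L-bar-ICP satisfies R* ≥ Σ_{j=1}^{i} (a_j + 1) = K − (i−1)L + i − 1. -/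
open Finset

theorem angMod_congr_aux {m : ℤ} {n : ℕ} (hn : 1 ≤ n) : (angMod m n : ℤ) ≡ m [ZMOD n] := by
  unfold angMod
  have h0 : 0 ≤ m % (n : ℤ) := Int.emod_nonneg _ (by omega)
  split_ifs with h
  · unfold Int.ModEq; simp [h]
  · rw [Int.toNat_of_nonneg h0]; exact Int.mod_modEq _ _

theorem angMod_mem_aux {m : ℤ} {n : ℕ} (hn : 1 ≤ n) : angMod m n ∈ Finset.Icc 1 n := by
  unfold angMod
  have h0 : 0 ≤ m % (n : ℤ) := Int.emod_nonneg _ (by omega)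
  have h1 : m % (n : ℤ) < n := Int.emod_lt_of_pos _ (by omega)
  rw [Finset.mem_Icc]
  split_ifs with h <;> omega

/-- Two integers that are congruent mod `n` and at distance less than `n` are equal. -/
theorem eq_of_modEq_aux {x y : ℤ} {n : ℕ} (h : x ≡ y [ZMOD n]) (h1 : x - y < n)
    (h2 : y - x < n) : x = y := by
  have hd : (n : ℤ) ∣ y - x := h.dvd
  have := Int.eq_zero_of_abs_lt_dvd hd (by rw [abs_lt]; constructor <;> omega)
  omega

theorem angMod_sub_inj_aux (c : ℤ) (n : ℕ) (hn : 1 ≤ n) :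
    Set.InjOn (fun j : ℕ => angMod (c - (j : ℤ)) n) (Finset.Icc 1 n : Finset ℕ) := by
  intro x hx y hy hxy
  simp only [Finset.coe_Icc, Set.mem_Icc] at hx hy hxy
  have h1 : c - (x : ℤ) ≡ c - (y : ℤ) [ZMOD n] :=
    (angMod_congr_aux hn).symm.trans (hxy ▸ angMod_congr_aux hn)
  have := eq_of_modEq_aux h1 (by omega) (by omega)
  omega

theorem angMod_add_inj_aux (c : ℤ) (n : ℕ) (hn : 1 ≤ n) :
    Set.InjOn (fun j : ℕ => angMod (c + (j : ℤ) - 1) n) (Finset.Icc 1 n : Finset ℕ) := by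
  intro x hx y hy hxy
  simp only [Finset.coe_Icc, Set.mem_Icc] at hx hy hxy
  have h1 : c + (x : ℤ) - 1 ≡ c + (y : ℤ) - 1 [ZMOD n] :=
    (angMod_congr_aux hn).symm.trans (hxy ▸ angMod_congr_aux hn)
  have := eq_of_modEq_aux h1 (by omega) (by omega)
  omega

theorem sum_shift_aux (f : ℕ → ℕ) (i : ℕ) (hi : 1 ≤ i) :
    ∑ t ∈ Finset.Icc 1 i, f (angMod ((i : ℤ) + (t : ℤ) - 1) i) = ∑ j ∈ Finset.Icc 1 i, f j := by
  have hm : Set.MapsTo (fun t : ℕ => angMod ((i : ℤ) + (t : ℤ) - 1) i)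
      (Finset.Icc 1 i : Finset ℕ) (Finset.Icc 1 i : Finset ℕ) :=
    fun t _ => angMod_mem_aux hi
  refine Finset.sum_nbij (fun t : ℕ => angMod ((i : ℤ) + (t : ℤ) - 1) i) hm
    (angMod_add_inj_aux _ _ hi) ?_ (fun _ _ => rfl)
  exact Finset.surjOn_of_injOn_of_card_le _ hm (angMod_add_inj_aux _ _ hi) le_rfl

theorem partial_sum_aux (a : ℕ → ℕ) (i t v : ℕ) (hi : 1 ≤ i) (hv : v ≤ i) :
    ∑ j ∈ Finset.Icc 1 v, a (angMod ((i : ℤ) + (t : ℤ) - (j : ℤ)) i)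
      ≤ ∑ j ∈ Finset.Icc 1 i, a j := by
  have hsub : Finset.Icc 1 v ⊆ Finset.Icc 1 i := Finset.Icc_subset_Icc le_rfl hv
  have hinj := angMod_sub_inj_aux ((i : ℤ) + (t : ℤ)) i hi
  rw [← Finset.sum_image (f := a) (s := Finset.Icc 1 v)
    (g := fun j : ℕ => angMod ((i : ℤ) + (t : ℤ) - (j : ℤ)) i)
    (hinj.mono (by exact_mod_cast hsub))]
  apply Finset.sum_le_sum_of_subset
  intro x hx
  obtain ⟨j, _, rfl⟩ := Finset.mem_image.1 hx
  exact angMod_mem_aux hi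

/-- User `k` knows no message `(b,t)` with `k ≤ b ≤ a_{t-1} + 1`. -/
theorem known_lt_aux (i L : ℕ) (hi : 1 ≤ i) (a : ℕ → ℕ)
    (K : ℕ) (hK : K = (i - 1) * L + (∑ j ∈ Finset.Icc 1 i, a j) + 1)
    (k b t : ℕ) (hk : 1 ≤ k)
    (hb : b ≤ a (angMod ((i : ℤ) + (t : ℤ) - 1) i) + 1)
    (h : (b, t) ∈ knownIdx K i L a k) : b < k := by
  obtain ⟨t', _, v, hv, r, hr, rfl, h2⟩ := h
  rw [Finset.mem_Icc] at hv hr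
  simp only at h2 hb
  by_contra hlt
  have hKpos : 1 ≤ K := by omega
  have hc := angMod_congr_aux (m := ((k : ℤ) + (∑ j ∈ Finset.Icc 1 v,
    (a (angMod ((i : ℤ) + (t : ℤ) - (j : ℤ)) i) : ℤ)) + ((v : ℤ) - 1) * (L : ℤ) + (r : ℤ))) hKpos
  rw [← h2] at hc
  have hps := partial_sum_aux a i t v hi (by omega)
  have hone : a (angMod ((i : ℤ) + (t : ℤ) - 1) i) ≤
      ∑ j ∈ Finset.Icc 1 v, a (angMod ((i : ℤ) + (t : ℤ) - (j : ℤ)) i) := by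
    have := Finset.single_le_sum
      (f := fun j : ℕ => a (angMod ((i : ℤ) + (t : ℤ) - (j : ℤ)) i))
      (s := Finset.Icc 1 v) (fun _ _ => Nat.zero_le _) (Finset.mem_Icc.2 ⟨le_rfl, hv.1⟩)
    simpa using this
  have hcast : (∑ j ∈ Finset.Icc 1 v, (a (angMod ((i : ℤ) + (t : ℤ) - (j : ℤ)) i) : ℤ)) =
    ((∑ j ∈ Finset.Icc 1 v, a (angMod ((i : ℤ) + (t : ℤ) - (j : ℤ)) i) : ℕ) : ℤ) := by
    push_cast; rfl
  rw [hcast] at hc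
  obtain ⟨w, rfl⟩ : ∃ w, v = w + 1 := ⟨v - 1, by omega⟩
  have hwL : w * L + L ≤ (i - 1) * L := by
    have := Nat.mul_le_mul_right L hv.2
    linarith [Nat.succ_mul w L]
  have hcw : (((w + 1 : ℕ) : ℤ) - 1) * (L : ℤ) = ((w * L : ℕ) : ℤ) := by push_cast; ring
  rw [hcw] at hc
  generalize w * L = wl at *
  generalize (i - 1) * L = il at *
  generalize (∑ j ∈ Finset.Icc 1 (w + 1), a (angMod ((i : ℤ) + (t : ℤ) - (j : ℤ)) i)) = s at *
  have := eq_of_modEq_aux hc (by omega) (by omega)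
  omega

instance msg_finite_aux (K i : ℕ) : Finite (Msg K i) := by
  have : {p : ℕ × ℕ | p.1 ∈ Finset.Icc 1 K ∧ p.2 ∈ Finset.Icc 1 i}.Finite := by
    refine ((Finset.Icc 1 K) ×ˢ (Finset.Icc 1 i)).finite_toSet.subset ?_
    intro p hp
    exact Finset.mem_coe.2 (Finset.mem_product.2 hp)
  exact this.to_subtype

theorem code_exists_aux {I U : Type} [Finite I] (W Kn : U → Set I) :
    ∃ ℓ, ValidCode W Kn 1 ℓ := by
  obtain ⟨n, ⟨e⟩⟩ := Finite.exists_equiv_fin I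
  refine ⟨n, fun x j => x (e.symm j) 0, fun u y _ m _ => y (e m.1), ?_⟩
  intro x u
  funext m j
  simp [Subsingleton.elim j 0]

theorem code_bound_aux (i L : ℕ) (hi : 1 ≤ i) (a : ℕ → ℕ)
    (K : ℕ) (hK : K = (i - 1) * L + (∑ j ∈ Finset.Icc 1 i, a j) + 1)
    (t ℓ : ℕ) (h : ValidCode (barWant K i) (barKnown K i L a) t ℓ) :
    (∑ j ∈ Finset.Icc 1 i, (a j + 1)) * t ≤ ℓ := by
  classical
  obtain ⟨E, D, hED⟩ := h
  let A : ℕ → ℕ := fun t => a (angMod ((i : ℤ) + (t : ℤ) - 1) i)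
  let S : Finset (Σ _ : ℕ, ℕ) := (Finset.Icc 1 i).sigma (fun t => Finset.Icc 1 (A t + 1))
  have hScard : S.card = ∑ j ∈ Finset.Icc 1 i, (a j + 1) := by
    simp only [S, Finset.card_sigma, Nat.card_Icc, A, Nat.add_sub_cancel]
    exact sum_shift_aux (fun j => a j + 1) i hi
  let ext : (S → Fin t → Bool) → Msg K i → Fin t → Bool := fun x m =>
    if h : (⟨m.1.2, m.1.1⟩ : Σ _ : ℕ, ℕ) ∈ S then x ⟨_, h⟩ else fun _ => false
  have hinj : Function.Injective (fun x => E (ext x)) := by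
    intro x y hxy
    simp only at hxy
    have key : ∀ k : ℕ, ∀ m : Msg K i, m.1.1 = k → ext x m = ext y m := by
      intro k
      induction k using Nat.strong_induction_on with
      | _ k ih =>
        intro m hm
        let u : User K := ⟨k, hm ▸ m.2.1⟩
        have hkn : (fun q : ↥(barKnown K i L a u) => ext x q.1) = fun q => ext y q.1 := by
          funext q
          by_cases hq : (⟨q.1.1.2, q.1.1.1⟩ : Σ _ : ℕ, ℕ) ∈ S
          · refine ih q.1.1.1 ?_ q.1 rfl
            have hq2 := (Finset.mem_Icc.1 (Finset.mem_sigma.1 hq).2).2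
            exact known_lt_aux i L hi a K hK k q.1.1.1 q.1.1.2
              (Finset.mem_Icc.1 u.2).1 hq2 q.2
          · simp only [ext, dif_neg hq]
        have e1 := hED (ext x) u
        have e2 := hED (ext y) u
        rw [hkn, hxy] at e1
        exact congrFun (e1.symm.trans e2) ⟨m, hm⟩
    funext s
    obtain ⟨⟨c, b⟩, hs⟩ := s
    have hs' := Finset.mem_sigma.1 hs
    have hb := Finset.mem_Icc.1 hs'.2
    have hAle : A c ≤ ∑ j ∈ Finset.Icc 1 i, a j :=
      Finset.single_le_sum (f := a) (fun _ _ => Nat.zero_le _) (angMod_mem_aux hi)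
    simp only at hb
    have hbK : b ∈ Finset.Icc 1 K := Finset.mem_Icc.2 ⟨hb.1, by omega⟩
    have := key b ⟨(b, c), hbK, hs'.1⟩ rfl
    simpa only [ext, dif_pos hs] using this
  have hc := Fintype.card_le_of_injective _ hinj
  simp only [Fintype.card_fun, Fintype.card_bool, Fintype.card_fin, Fintype.card_coe,
    ← pow_mul] at hc
  rw [hScard] at hc
  have := (Nat.pow_le_pow_iff_right (by norm_num : 1 < 2)).1 hc
  rwa [mul_comm]


/-- Theorem 2 of the paper: lower bound on the optimal broadcast
rate of the `(a_i,…,a_1)_L`-bar-ICP: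
`R* ≥ Σ_{j=1}^{i} (a_j + 1) = K − (i−1)L + i − 1`. -/
theorem stmt1 (i L : ℕ) (hi : 1 ≤ i) (hL : 1 ≤ L) (a : ℕ → ℕ)
    (K : ℕ) (hK : K = (i - 1) * L + (∑ j ∈ Finset.Icc 1 i, a j) + 1) :
    (∑ j ∈ Finset.Icc 1 i, ((a j : ℝ) + 1)) ≤ optRate (barWant K i) (barKnown K i L a) ∧
    (∑ j ∈ Finset.Icc 1 i, ((a j : ℝ) + 1)) =
      (K : ℝ) - ((i : ℝ) - 1) * (L : ℝ) + (i : ℝ) - 1 := by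
  constructor
  · unfold optRate
    apply le_csInf
    · obtain ⟨ℓ, hℓ⟩ := code_exists_aux (barWant K i) (barKnown K i L a)
      exact ⟨_, 1, ℓ, le_rfl, hℓ, rfl⟩
    · rintro ρ ⟨t, ℓ, ht, hc, rfl⟩
      have hb := code_bound_aux i L hi a K hK t ℓ hc
      have htpos : (0 : ℝ) < t := by exact_mod_cast ht
      rw [le_div_iff₀ htpos]
      exact_mod_cast hb
  · obtain ⟨n, rfl⟩ : ∃ n, i = n + 1 := ⟨i - 1, by omega⟩
    rw [Finset.sum_add_distrib, hK]
    push_cast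
    simp
    ring
end

section
/- Let i ≥ 1, L ≥ 1 and a nonnegative integer a_i be given, set a_1 = a_2 = … = a_{i−1} = 0 and K = (i−1)L + a_i + 1. Then the optimal broadcast rate R*_1 of the (a_i,0,…,0)_L-bar-ICP equals exactly K − (i−1)L + i − 1. -/
open Finset

lemma angMod_cast (m : ℤ) (n : ℕ) (hn : 1 ≤ n) : ((angMod m n : ℕ) : ZMod n) = (m : ZMod n) := by
  unfold angMod
  have h0 : (0 : ℤ) ≤ m % (n : ℤ) := Int.emod_nonneg _ (by omega)
  split_ifs with h
  · have : (n : ℤ) ∣ m := Int.dvd_of_emod_eq_zero h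
    rw [(ZMod.intCast_zmod_eq_zero_iff_dvd m n).2 this]; simp
  · have : (((m % (n : ℤ)).toNat : ℤ) : ZMod n) = (m : ZMod n) := by
      rw [Int.toNat_of_nonneg h0]; simp
    exact (Int.cast_natCast _).symm.trans this

lemma angMod_mem_s3 (m : ℤ) (n : ℕ) (hn : 1 ≤ n) : 1 ≤ angMod m n ∧ angMod m n ≤ n := by
  unfold angMod
  have h0 : (0 : ℤ) ≤ m % (n : ℤ) := Int.emod_nonneg _ (by omega)
  have h1 : m % (n : ℤ) < n := Int.emod_lt_of_pos _ (by omega)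
  split_ifs with h <;> omega

lemma eq_of_cast_range {n : ℕ} {b c : ℕ} (hb : 1 ≤ b ∧ b ≤ n) (hc : 1 ≤ c ∧ c ≤ n)
    (h : (b : ZMod n) = (c : ZMod n)) : b = c := by
  have h2 : ((b : ℤ) : ZMod n) = ((c : ℤ) : ZMod n) := by exact_mod_cast h
  have h3 := (ZMod.intCast_eq_intCast_iff_dvd_sub _ _ _).1 h2
  have := Int.eq_zero_of_abs_lt_dvd h3 (by rw [abs_lt]; omega)
  omega

lemma angMod_eq (m : ℤ) (n b : ℕ) (hb : 1 ≤ b ∧ b ≤ n) (h : (b : ZMod n) = (m : ZMod n)) :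
    b = angMod m n :=
  eq_of_cast_range hb (angMod_mem_s3 m n (by omega)) (by rw [angMod_cast m n (by omega), h])

lemma sum_a (n : ℕ) (a : ℕ → ℕ) (ha : ∀ j, 1 ≤ j → j ≤ n → a j = 0) (t v : ℕ)
    (ht : 1 ≤ t) (ht' : t ≤ n + 1) (hv : v ≤ n) :
    (∑ j ∈ Finset.Icc 1 v, (a (angMod (((n + 1 : ℕ) : ℤ) + (t : ℤ) - (j : ℤ)) (n + 1)) : ℤ))
      = if t ≤ v then (a (n + 1) : ℤ) else 0 := by
  have key : ∀ j ∈ Finset.Icc 1 v,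
      (a (angMod (((n + 1 : ℕ) : ℤ) + (t : ℤ) - (j : ℤ)) (n + 1)) : ℤ)
        = if j = t then (a (n + 1) : ℤ) else 0 := by
    intro j hj
    rw [Finset.mem_Icc] at hj
    rcases lt_trichotomy j t with h | h | h
    · rw [← angMod_eq _ (n + 1) (t - j) (by omega) (by
        rw [Nat.cast_sub h.le]; push_cast
        have : ((n : ZMod (n + 1)) + 1) = 0 := by exact_mod_cast ZMod.natCast_self (n + 1)
        rw [this]; ring), if_neg (by omega), ha _ (by omega) (by omega)]; rfl
    · subst h
      rw [← angMod_eq _ (n + 1) (n + 1) (by omega) (by push_cast; ring), if_pos rfl]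
    · rw [← angMod_eq _ (n + 1) (n + 1 + t - j) (by omega) (by
        rw [Nat.cast_sub (by omega)]; push_cast; ring), if_neg (by omega),
        ha _ (by omega) (by omega)]; rfl
  rw [Finset.sum_congr rfl key, Finset.sum_ite_eq']
  by_cases h : t ≤ v
  · rw [if_pos h, if_pos (Finset.mem_Icc.2 ⟨ht, h⟩)]
  · rw [if_neg h, if_neg (by rw [Finset.mem_Icc]; omega)]

/-- Clean description of the side information. -/
lemma known_iff (n L : ℕ) (a : ℕ → ℕ) (ha : ∀ j, 1 ≤ j → j ≤ n → a j = 0) (K : ℕ)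
    (k b t : ℕ) (hb : 1 ≤ b ∧ b ≤ K) (ht : 1 ≤ t ∧ t ≤ n + 1) :
    (b, t) ∈ knownIdx K (n + 1) L a k ↔ ∃ w q : ℕ, w < n ∧ q < L ∧
      (b : ZMod K) = (k : ZMod K) +
        (((if t ≤ w + 1 then a (n + 1) else 0) + w * L + q + 1 : ℕ) : ZMod K) := by
  constructor
  · rintro ⟨t', ht', v, hv, r, hr, h1, h2⟩
    simp only at h1 h2
    subst h1
    rw [Finset.mem_Icc] at hv hr
    refine ⟨v - 1, r - 1, by omega, by omega, ?_⟩
    rw [h2, angMod_cast _ _ (by omega), sum_a n a ha t v ht.1 ht.2 (by omega)]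
    obtain ⟨v, rfl⟩ : ∃ v', v = v' + 1 := ⟨v - 1, by omega⟩
    obtain ⟨r, rfl⟩ : ∃ v', r = v' + 1 := ⟨r - 1, by omega⟩
    simp only [Nat.add_sub_cancel]
    split_ifs <;> push_cast <;> ring
  · rintro ⟨w, q, hw, hq, h⟩
    refine ⟨t, Finset.mem_Icc.2 ht, w + 1, Finset.mem_Icc.2 (by omega), q + 1,
      Finset.mem_Icc.2 (by omega), rfl, ?_⟩
    simp only
    apply angMod_eq _ _ _ hb
    rw [sum_a n a ha t (w + 1) ht.1 ht.2 (by omega), h]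
    split_ifs <;> push_cast <;> ring

lemma off_le (n L w q : ℕ) (hw : w < n) (hq : q < L) : w * L + q + 1 ≤ n * L := by
  have : (w + 1) * L ≤ n * L := Nat.mul_le_mul_right _ hw
  nlinarith

/-- no user knows its own message -/
lemma not_known_self (n L : ℕ) (a : ℕ → ℕ) (ha : ∀ j, 1 ≤ j → j ≤ n → a j = 0) (K : ℕ)
    (hK : K = n * L + a (n + 1) + 1) (k t : ℕ) (hb : 1 ≤ k ∧ k ≤ K) (ht : 1 ≤ t ∧ t ≤ n + 1) :
    (k, t) ∉ knownIdx K (n + 1) L a k := by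
  rw [known_iff n L a ha K k k t hb ht]
  rintro ⟨w, q, hw, hq, h⟩
  have := off_le n L w q hw hq
  have h1 := left_eq_add.1 h
  rw [ZMod.natCast_eq_zero_iff] at h1
  have := Nat.le_of_dvd (by omega) h1
  split_ifs at this <;> omega

lemma not_known_next (n L : ℕ) (a : ℕ → ℕ) (ha : ∀ j, 1 ≤ j → j ≤ n → a j = 0) (K : ℕ)
    (hK : K = n * L + a (n + 1) + 1) (k b : ℕ) (hk : 1 ≤ k) (hkb : k < b)
    (hb : b ≤ a (n + 1) + 1) :
    (b, 1) ∉ knownIdx K (n + 1) L a k := by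
  rw [known_iff n L a ha K k b 1 (by omega) (by omega)]
  rintro ⟨w, q, hw, hq, h⟩
  have := off_le n L w q hw hq
  rw [if_pos (by omega)] at h
  have h2 : ((b : ℤ) : ZMod K) = ((k + (a (n + 1) + w * L + q + 1 : ℕ) : ℤ) : ZMod K) := by
    push_cast; push_cast at h; exact h
  have h3 := (ZMod.intCast_eq_intCast_iff_dvd_sub _ _ _).1 h2
  have := Int.eq_zero_of_abs_lt_dvd h3 (by rw [abs_lt]; push_cast; constructor <;> nlinarith)
  push_cast at this
  nlinarith

lemma validCode_of_sep {I U : Type} (W Kn : U → Set I) (t ℓ : ℕ)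
    (E : (I → Fin t → Bool) → Fin ℓ → Bool)
    (h : ∀ u x y, E x = E y → (∀ m ∈ Kn u, x m = y m) → ∀ m ∈ W u, x m = y m) :
    ValidCode W Kn t ℓ := by
  classical
  refine ⟨E, fun u c s m =>
    if hh : ∃ x, E x = c ∧ (fun m : ↥(Kn u) => x m.1) = s then hh.choose m.1 else fun _ => false, ?_⟩
  intro x u
  funext m
  have hh : ∃ y, E y = E x ∧ (fun m : ↥(Kn u) => y m.1) = (fun m => x m.1) := ⟨x, rfl, rfl⟩
  refine (dif_pos hh).trans ?_
  exact h u _ _ hh.choose_spec.1 (fun m hm => congrFun hh.choose_spec.2 ⟨m, hm⟩) m.1 m.2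

lemma sep_of_validCode {I U : Type} {W Kn : U → Set I} {t ℓ : ℕ} (h : ValidCode W Kn t ℓ) :
    ∃ E : (I → Fin t → Bool) → Fin ℓ → Bool,
      ∀ u x y, E x = E y → (∀ m ∈ Kn u, x m = y m) → ∀ m ∈ W u, x m = y m := by
  obtain ⟨E, D, h⟩ := h
  refine ⟨E, fun u x y hE hk m hm => ?_⟩
  have h1 := h x u
  have h2 := h y u
  rw [hE, show (fun m : ↥(Kn u) => x m.1) = (fun m => y m.1) from
    funext fun m => hk m.1 m.2, h2] at h1
  exact (congrFun h1 ⟨m, hm⟩).symm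

lemma lower (n L : ℕ) (a : ℕ → ℕ) (ha : ∀ j, 1 ≤ j → j ≤ n → a j = 0) (K : ℕ)
    (hK : K = n * L + a (n + 1) + 1) (t ℓ : ℕ)
    (h : ValidCode (barWant K (n + 1)) (barKnown K (n + 1) L a) t ℓ) :
    (a (n + 1) + (n + 1)) * t ≤ ℓ := by
  obtain ⟨E, hE⟩ := sep_of_validCode h
  set A := a (n + 1) with hA
  let g : Fin (n + 1) ⊕ Fin A → Msg K (n + 1) := Sum.elim
    (fun s => ⟨(1, s.1 + 1), by simp only [Finset.mem_Icc]; omega⟩)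
    (fun s => ⟨(s.1 + 2, 1), by simp only [Finset.mem_Icc]; omega⟩)
  have hg : Function.Injective g := by
    intro s s' h
    have h1 := congrArg (fun m : Msg K (n + 1) => m.1.1) h
    have h2 := congrArg (fun m : Msg K (n + 1) => m.1.2) h
    rcases s with s | s <;> rcases s' with s' | s' <;>
      simp only [g, Sum.elim_inl, Sum.elim_inr] at h1 h2
    · exact congrArg Sum.inl (Fin.ext (by omega))
    · omega
    · omega
    · exact congrArg Sum.inr (Fin.ext (by omega))
  have hin : Function.Injective
      (fun y : (Fin (n + 1) ⊕ Fin A → Fin t → Bool) => E (Function.extend g y 0)) := by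
    intro y y' hy
    simp only at hy
    have hag : ∀ u : ℕ, ∀ hu : u ∈ Finset.Icc 1 K, u ≤ A + 1 →
        ∀ m ∈ barWant K (n + 1) ⟨u, hu⟩,
          Function.extend g y 0 m = Function.extend g y' 0 m := by
      intro u
      induction u using Nat.strong_induction_on with
      | _ u ih =>
        intro hu huA
        refine hE ⟨u, hu⟩ _ _ hy ?_
        intro m hm
        by_cases hr : ∃ s, g s = m
        · have hu1 := Finset.mem_Icc.1 hu
          have hlt : m.1.1 < u := by
            obtain ⟨s, rfl⟩ := hr
            by_contra hcon
            rcases s with s | s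
            · simp [g] at hcon
              have : u = 1 := by omega
              subst this
              exact not_known_self n L a ha K hK 1 (s.1 + 1) hu1 (by omega) hm
            · simp [g] at hcon
              rcases hcon.lt_or_eq with h | h
              · exact not_known_next n L a ha K hK u (s.1 + 2) hu1.1 h (by omega) hm
              · subst h
                exact not_known_self n L a ha K hK (s.1 + 2) 1 hu1 (by omega) hm
          exact ih m.1.1 hlt m.2.1 (by omega) m rfl
        · rw [Function.extend_apply' _ _ _ hr, Function.extend_apply' _ _ _ hr]
    funext s
    have h1 : (g s).1.1 ≤ A + 1 := by
      rcases s with s | s <;> simp only [g, Sum.elim_inl, Sum.elim_inr] <;> omega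
    have := hag (g s).1.1 (g s).2.1 h1 (g s) rfl
    rwa [hg.extend_apply, hg.extend_apply] at this
  have hc := Fintype.card_le_of_injective _ hin
  simp only [Fintype.card_fun, Fintype.card_bool, Fintype.card_fin, Fintype.card_sum] at hc
  rw [← pow_mul, Nat.pow_le_pow_iff_right (by norm_num)] at hc
  calc _ = t * (n + 1 + A) := by ring
    _ ≤ ℓ := hc

/-- aligned index of a message -/
def idx (K L : ℕ) (b t : ℕ) : ZMod K := (b : ZMod K) - (((t - 1) * L : ℕ) : ZMod K)

/-- set of indices seen by user k -/
def Jset (K n L A : ℕ) (k : ℕ) : Finset (ZMod K) :=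
  (Finset.Icc 1 A).image (fun s : ℕ => (k : ZMod K) + s) ∪
    (Finset.Icc 1 (n + 1)).image (fun t => idx K L k t)

lemma Jset_card (K n L A k : ℕ) : (Jset K n L A k).card ≤ A + (n + 1) := by
  refine (Finset.card_union_le _ _).trans (Nat.add_le_add ?_ ?_)
  · exact Finset.card_image_le.trans (by simp)
  · exact Finset.card_image_le.trans (by simp)

lemma cover (n L : ℕ) (hL : 1 ≤ L) (a : ℕ → ℕ) (ha : ∀ j, 1 ≤ j → j ≤ n → a j = 0) (K : ℕ)
    (hK : K = n * L + a (n + 1) + 1) (k b t : ℕ) (hb : 1 ≤ b ∧ b ≤ K)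
    (ht : 1 ≤ t ∧ t ≤ n + 1) (hk : 1 ≤ k ∧ k ≤ K) (hn : (b, t) ∉ knownIdx K (n + 1) L a k) :
    idx K L b t ∈ Jset K n L (a (n + 1)) k := by
  rw [known_iff n L a ha K k b t hb ht] at hn
  obtain ⟨t, rfl⟩ : ∃ t', t = t' + 1 := ⟨t - 1, by omega⟩
  have hKz : NeZero K := ⟨by omega⟩
  obtain ⟨e, heK, he⟩ : ∃ e : ℕ, e < K ∧ (b : ZMod K) = k + e :=
    ⟨((b : ZMod K) - k).val, ZMod.val_lt _, by simp⟩
  have htL : t * L ≤ n * L := Nat.mul_le_mul_right _ (by omega)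
  by_cases h0 : e = 0
  · subst h0
    have : b = k := eq_of_cast_range hb hk (by simpa using he)
    subst this
    exact Finset.mem_union_right _ (Finset.mem_image.2 ⟨t + 1, by simp; omega, rfl⟩)
  have hdm := fun x : ℕ => Nat.div_add_mod' x L
  have hml := fun x : ℕ => Nat.mod_lt x (show L > 0 by omega)
  by_cases h1 : e ≤ t * L
  · exfalso
    have hq : (e - 1) / L < t := by rw [Nat.div_lt_iff_lt_mul (by omega)]; omega
    refine hn ⟨(e - 1) / L, (e - 1) % L, by omega, hml _, ?_⟩
    rw [if_neg (by omega), he]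
    congr 2
    have := hdm (e - 1)
    omega
  by_cases h2 : e ≤ t * L + a (n + 1)
  · refine Finset.mem_union_left _ (Finset.mem_image.2 ⟨e - t * L, by simp; omega, ?_⟩)
    simp only [idx, Nat.add_sub_cancel]
    rw [he, Nat.cast_sub (by omega)]
    ring
  · exfalso
    have hq : (e - a (n + 1) - 1) / L < n := by rw [Nat.div_lt_iff_lt_mul (by omega)]; omega
    have hq2 : t ≤ (e - a (n + 1) - 1) / L := by rw [Nat.le_div_iff_mul_le (by omega)]; omega
    refine hn ⟨(e - a (n + 1) - 1) / L, (e - a (n + 1) - 1) % L, by omega, hml _, ?_⟩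
    rw [if_pos (by omega), he]
    congr 2
    have := hdm (e - a (n + 1) - 1)
    omega

lemma unique_idx (n L : ℕ) (hL : 1 ≤ L) (a : ℕ → ℕ) (ha : ∀ j, 1 ≤ j → j ≤ n → a j = 0) (K : ℕ)
    (hK : K = n * L + a (n + 1) + 1) (k b t t' : ℕ) (hb : 1 ≤ b ∧ b ≤ K)
    (ht : 1 ≤ t ∧ t ≤ n + 1) (ht' : 1 ≤ t' ∧ t' ≤ n + 1) (hk : 1 ≤ k ∧ k ≤ K)
    (hn : (b, t') ∉ knownIdx K (n + 1) L a k) (he : idx K L b t' = idx K L k t) :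
    b = k ∧ t' = t := by
  rw [known_iff n L a ha K k b t' hb ht'] at hn
  unfold idx at he
  obtain ⟨L, rfl⟩ : ∃ L', L = L' + 1 := ⟨L - 1, by omega⟩
  rcases lt_trichotomy t' t with h | h | h
  · exfalso
    obtain ⟨d, rfl⟩ : ∃ d, t = t' + d + 1 := ⟨t - t' - 1, by omega⟩
    obtain ⟨w, hw⟩ : ∃ w, n = w + d + 1 := ⟨n - d - 1, by omega⟩
    refine hn ⟨w, 0, by omega, by omega, ?_⟩
    rw [if_pos (by omega)]
    have hz : ((K : ℕ) : ZMod K) = 0 := ZMod.natCast_self K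
    have hz2 : (((w + d + 1) * (L + 1) + a (n + 1) + 1 : ℕ) : ZMod K) = 0 := by
      rw [← hw, ← hK]; exact hz
    obtain ⟨t', rfl⟩ : ∃ d, t' = d + 1 := ⟨t' - 1, by omega⟩
    rw [show t' + 1 + d + 1 - 1 = t' + d + 1 by omega, Nat.add_sub_cancel] at he
    push_cast at he hz2 ⊢
    linear_combination he - hz2
  · subst h
    exact ⟨eq_of_cast_range hb hk (by simpa using he), rfl⟩
  · exfalso
    obtain ⟨d, rfl⟩ : ∃ d, t' = t + d + 1 := ⟨t' - t - 1, by omega⟩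
    refine hn ⟨d, L, by omega, by omega, ?_⟩
    rw [if_neg (by omega)]
    obtain ⟨t, rfl⟩ : ∃ d, t = d + 1 := ⟨t - 1, by omega⟩
    rw [show t + 1 + d + 1 - 1 = t + d + 1 by omega, Nat.add_sub_cancel] at he
    push_cast at he ⊢
    linear_combination he

lemma upper (n L : ℕ) (hL : 1 ≤ L) (a : ℕ → ℕ) (ha : ∀ j, 1 ≤ j → j ≤ n → a j = 0) (K : ℕ)
    (hK : K = n * L + a (n + 1) + 1) :
    ValidCode (barWant K (n + 1)) (barKnown K (n + 1) L a) K ((a (n + 1) + (n + 1)) * K) := by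
  classical
  set A := a (n + 1) with hA
  have hKz : NeZero K := ⟨by omega⟩
  have : Fact (Nat.Prime 2) := ⟨Nat.prime_two⟩
  obtain ⟨F, _, _, hF⟩ : ∃ (F : Type) (_ : Field F) (_ : Fintype F), Fintype.card F = 2 ^ K :=
    ⟨GaloisField 2 K, inferInstance, Fintype.ofFinite _, by
      exact (@Nat.card_eq_fintype_card _ (Fintype.ofFinite _)).symm.trans
        (GaloisField.card 2 K (by omega))⟩
  have e : (Fin K → Bool) ≃ F := Fintype.equivOfCardEq (by simp [hF])
  have c : (Fin (A + (n + 1)) → F) ≃ (Fin ((A + (n + 1)) * K) → Bool) :=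
    Fintype.equivOfCardEq (by simp [hF, ← pow_mul, mul_comm])
  obtain ⟨α⟩ : Nonempty (ZMod K ↪ F) := Function.Embedding.nonempty_of_card_le (by
    rw [hF, ZMod.card]; exact Nat.lt_two_pow_self.le)
  have : Fintype (Msg K (n + 1)) :=
    Fintype.ofInjective (β := (Finset.Icc 1 K) × (Finset.Icc 1 (n + 1)))
      (fun p => (⟨p.1.1, p.2.1⟩, ⟨p.1.2, p.2.2⟩)) (by
        rintro ⟨⟨p, q⟩, h⟩ ⟨⟨p', q'⟩, h'⟩ hh
        simpa using hh)
  let id' : Msg K (n + 1) → F := fun m => α (idx K L m.1.1 m.1.2)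
  refine validCode_of_sep _ _ _ _
    (fun x => c (fun s => ∑ m, id' m ^ (s : ℕ) * e (x m))) ?_
  rintro ⟨k, hk⟩ x y hxy hkn m0 hm0
  have hk' := Finset.mem_Icc.1 hk
  have hm0' : m0.1.1 = k := hm0
  have hxy' := c.injective hxy
  set z : Msg K (n + 1) → F := fun m => e (x m) - e (y m) with hz
  have hpow : ∀ s < A + (n + 1), ∑ m, id' m ^ s * z m = 0 := by
    intro s hs
    have := congrFun hxy' ⟨s, hs⟩
    simp only [hz, mul_sub, Finset.sum_sub_distrib]
    exact sub_eq_zero.2 this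
  have hpoly : ∀ p : Polynomial F, p.natDegree < A + (n + 1) →
      ∑ m, p.eval (id' m) * z m = 0 := by
    intro p hp
    simp only [Polynomial.eval_eq_sum_range, Finset.sum_mul]
    rw [Finset.sum_comm]
    refine Finset.sum_eq_zero fun s hs => ?_
    rw [Finset.mem_range] at hs
    simp only [mul_assoc]
    rw [← Finset.mul_sum, hpow s (by omega), mul_zero]
  have ht0 := Finset.mem_Icc.1 m0.2.2
  have hj0 : idx K L m0.1.1 m0.1.2 ∈ Jset K n L A k := by
    rw [hm0']
    exact Finset.mem_union_right _ (Finset.mem_image.2 ⟨m0.1.2, m0.2.2, rfl⟩)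
  set J := (Jset K n L A k).erase (idx K L m0.1.1 m0.1.2) with hJ
  let p : Polynomial F := ∏ j ∈ J, (Polynomial.X - Polynomial.C (α j))
  have hp : p.natDegree < A + (n + 1) := by
    have h1 : p.natDegree = J.card := by
      simp [p, Polynomial.natDegree_finsetProd_X_sub_C_eq_card]
    rw [h1]
    exact (Finset.card_erase_lt_of_mem hj0).trans_le (Jset_card _ _ _ _ _)
  have hsum := hpoly p hp
  rw [Finset.sum_eq_single m0] at hsum
  · rcases mul_eq_zero.1 hsum with h | h
    · exfalso
      rw [Polynomial.eval_prod, Finset.prod_eq_zero_iff] at h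
      obtain ⟨j, hj, h⟩ := h
      simp only [Polynomial.eval_sub, Polynomial.eval_X, Polynomial.eval_C, id'] at h
      have := α.injective (sub_eq_zero.1 h)
      rw [hJ, Finset.mem_erase] at hj
      exact hj.1 this.symm
    · exact e.injective (sub_eq_zero.1 h)
  · intro m _ hne
    by_cases hmk : m ∈ barKnown K (n + 1) L a ⟨k, hk⟩
    · simp [hz, hkn m hmk]
    · have hb := Finset.mem_Icc.1 m.2.1
      have ht := Finset.mem_Icc.1 m.2.2
      have h1 := cover n L hL a ha K hK k m.1.1 m.1.2 hb ht hk' hmk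
      have h2 : idx K L m.1.1 m.1.2 ≠ idx K L m0.1.1 m0.1.2 := by
        intro h
        rw [hm0'] at h
        have := unique_idx n L hL a ha K hK k m.1.1 m0.1.2 m.1.2 hb ht0 ht hk' hmk h
        exact hne (Subtype.ext (Prod.ext (this.1.trans hm0'.symm) this.2))
      rw [Polynomial.eval_prod, Finset.prod_eq_zero (Finset.mem_erase.2 ⟨h2, h1⟩) (by simp [id']),
        zero_mul]
  · intro h; exact absurd (Finset.mem_univ _) h

/-- first part of Corollary 4 of the paper: the optimal broadcast
rate of the `(a_i,0,…,0)_L`-bar-ICP equals exactly `K − (i−1)L + i − 1`. -/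
theorem stmt3 (i L : ℕ) (hi : 1 ≤ i) (hL : 1 ≤ L) (a : ℕ → ℕ)
    (ha : ∀ j, 1 ≤ j → j ≤ i - 1 → a j = 0)
    (K : ℕ) (hK : K = (i - 1) * L + a i + 1) :
    optRate (barWant K i) (barKnown K i L a) =
      (K : ℝ) - ((i : ℝ) - 1) * (L : ℝ) + (i : ℝ) - 1 := by
  obtain ⟨n, rfl⟩ : ∃ n, i = n + 1 := ⟨i - 1, by omega⟩
  simp only [Nat.add_sub_cancel] at ha hK
  have hKr : (K : ℝ) = n * L + a (n + 1) + 1 := by rw [hK]; push_cast; ring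
  have hK0 : (0 : ℝ) < K := by exact_mod_cast (show 0 < K by omega)
  have hval : (K : ℝ) - (((n + 1 : ℕ) : ℝ) - 1) * (L : ℝ) + ((n + 1 : ℕ) : ℝ) - 1
      = ((a (n + 1) + (n + 1) : ℕ) : ℝ) := by
    rw [hKr]; push_cast; ring
  rw [hval]
  apply IsLeast.csInf_eq
  constructor
  · refine ⟨K, (a (n + 1) + (n + 1)) * K, by omega, upper n L hL a ha K hK, ?_⟩
    rw [Nat.cast_mul, mul_div_cancel_right₀ _ hK0.ne']
  · rintro ρ ⟨t, ℓ, ht, hv, rfl⟩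
    have := lower n L a ha K hK t ℓ hv
    rw [le_div_iff₀ (by exact_mod_cast ht)]
    exact_mod_cast this
end

section
/- Let i ≥ 1, L ≥ 1 and nonnegative integers a_1,…,a_i be given, and set K = (i−1)L + Σ_{j=1}^{i} a_j + 1. Consider the side-information digraph of the (a_i,…,a_1)_L-bar-ICP: its vertex set is the set of nodes [K]×[i], with an arc from node (k,t) to node (k',t') if and only if (k',t') ∈ K_k. Then there exists a set S of nodes with |S| = K − (i−1)L + i − 1 such that the subgraph induced on S contains no directed cycle. -/
open Finset

lemma angMod_spec (m : ℤ) (n : ℕ) (hn : 1 ≤ n) :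
    1 ≤ angMod m n ∧ angMod m n ≤ n ∧ (n : ℤ) ∣ (angMod m n : ℤ) - m := by
  have hpos : (0 : ℤ) < n := by exact_mod_cast hn
  have h0 := Int.emod_nonneg m hpos.ne'
  have h1 := Int.emod_lt_of_pos m hpos
  have h2 := Int.mul_ediv_add_emod m n
  unfold angMod
  split_ifs with h
  · refine ⟨hn, le_rfl, ⟨1 - m / n, ?_⟩⟩
    rw [h] at h2
    linear_combination h2
  · refine ⟨by omega, by omega, ⟨- (m / n), ?_⟩⟩
    rw [Int.toNat_of_nonneg h0]
    linear_combination h2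

lemma eq_of_dvd_small (n : ℕ) (x y : ℕ) (hx : 1 ≤ x ∧ x ≤ n) (hy : 1 ≤ y ∧ y ≤ n)
    (h : (n : ℤ) ∣ (x : ℤ) - y) : x = y := by
  have := Int.eq_zero_of_abs_lt_dvd h (by rw [abs_lt]; constructor <;> omega)
  omega

lemma sum_shift (i : ℕ) (hi : 1 ≤ i) (a : ℕ → ℕ) :
    ∑ t ∈ Icc 1 i, a (angMod ((i : ℤ) + (t : ℤ) - 1) i) = ∑ j ∈ Icc 1 i, a j := by
  have hinj : Set.InjOn (fun t : ℕ => angMod ((i : ℤ) + (t : ℤ) - 1) i) (Icc 1 i : Finset ℕ) := by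
    intro x hx y hy hxy
    simp only [coe_Icc, Set.mem_Icc] at hx hy
    have h1 := (angMod_spec ((i : ℤ) + (x : ℤ) - 1) i hi).2.2
    have h2 := (angMod_spec ((i : ℤ) + (y : ℤ) - 1) i hi).2.2
    simp only at hxy
    rw [hxy] at h1
    refine eq_of_dvd_small i x y hx hy ?_
    have := dvd_sub h2 h1
    ring_nf at this ⊢
    exact this
  have himg : (Icc 1 i).image (fun t : ℕ => angMod ((i : ℤ) + (t : ℤ) - 1) i) = Icc 1 i := by
    apply eq_of_subset_of_card_le
    · intro z hz
      obtain ⟨t, _, rfl⟩ := mem_image.1 hz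
      have := angMod_spec ((i : ℤ) + (t : ℤ) - 1) i hi
      exact mem_Icc.2 ⟨this.1, this.2.1⟩
    · rw [card_image_of_injOn hinj]
  conv_rhs => rw [← himg]
  rw [sum_image hinj]

lemma sum_part (i t v : ℕ) (hi : 1 ≤ i) (hv : v ≤ i) (a : ℕ → ℕ) :
    ∑ j ∈ Icc 1 v, a (angMod ((i : ℤ) + (t : ℤ) - (j : ℤ)) i) ≤ ∑ j ∈ Icc 1 i, a j := by
  have hinj : Set.InjOn (fun j : ℕ => angMod ((i : ℤ) + (t : ℤ) - (j : ℤ)) i)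
      (Icc 1 v : Finset ℕ) := by
    intro x hx y hy hxy
    simp only [coe_Icc, Set.mem_Icc] at hx hy
    have h1 := (angMod_spec ((i : ℤ) + (t : ℤ) - (x : ℤ)) i hi).2.2
    have h2 := (angMod_spec ((i : ℤ) + (t : ℤ) - (y : ℤ)) i hi).2.2
    simp only at hxy
    rw [hxy] at h1
    refine eq_of_dvd_small i x y ⟨hx.1, by omega⟩ ⟨hy.1, by omega⟩ ?_
    have := dvd_sub h1 h2
    ring_nf at this ⊢
    exact this
  rw [← sum_image (f := a) hinj]
  apply sum_le_sum_of_subset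
  intro z hz
  obtain ⟨j, _, rfl⟩ := mem_image.1 hz
  have := angMod_spec ((i : ℤ) + (t : ℤ) - (j : ℤ)) i hi
  exact mem_Icc.2 ⟨this.1, this.2.1⟩

theorem stmt9 (i L : ℕ) (hi : 1 ≤ i) (hL : 1 ≤ L) (a : ℕ → ℕ)
    (K : ℕ) (hK : K = (i - 1) * L + (∑ j ∈ Finset.Icc 1 i, a j) + 1) :
    ∃ S : Finset (ℕ × ℕ),
      (∀ p ∈ S, p.1 ∈ Finset.Icc 1 K ∧ p.2 ∈ Finset.Icc 1 i) ∧
      S.card = K - (i - 1) * L + i - 1 ∧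
      ¬ ∃ (m : ℕ) (f : ℕ → ℕ × ℕ), 0 < m ∧ (∀ j ≤ m, f j ∈ S) ∧
          (∀ j < m, f (j + 1) ∈ knownIdx K i L a (f j).1) ∧ f m = f 0 := by
  set c : ℕ → ℕ := fun t => a (angMod ((i : ℤ) + (t : ℤ) - 1) i) with hc
  set A := ∑ j ∈ Finset.Icc 1 i, a j with hA
  have hcA : ∑ t ∈ Icc 1 i, c t = A := sum_shift i hi a
  have hcle : ∀ t ∈ Icc 1 i, c t ≤ A := fun t ht => by
    rw [← hcA]
    exact single_le_sum (f := c) (fun _ _ => Nat.zero_le _) ht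
  let S : Finset (ℕ × ℕ) :=
    ((Icc 1 i).sigma (fun t => Icc 1 (c t + 1))).image (fun x => (x.2, x.1))
  have hS : ∀ p, p ∈ S ↔ p.2 ∈ Icc 1 i ∧ p.1 ∈ Icc 1 (c p.2 + 1) := by
    rintro ⟨b, t⟩
    simp only [S, mem_image, mem_sigma]
    constructor
    · rintro ⟨⟨x, y⟩, hxy, h⟩
      simp only [Prod.mk.injEq] at h
      obtain ⟨rfl, rfl⟩ := h
      exact hxy
    · intro h
      exact ⟨⟨t, b⟩, h, rfl⟩
  refine ⟨S, ?_, ?_, ?_⟩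
  · intro p hp
    obtain ⟨h1, h2⟩ := (hS p).1 hp
    have := hcle _ h1
    rw [mem_Icc] at h2
    refine ⟨mem_Icc.2 ⟨h2.1, ?_⟩, h1⟩
    rw [hK]
    omega
  · have : S.card = A + i := by
      rw [card_image_of_injective, card_sigma]
      · simp [sum_add_distrib, hcA]
      · rintro ⟨x, y⟩ ⟨x', y'⟩ h
        simp only [Prod.mk.injEq] at h
        obtain ⟨rfl, rfl⟩ := h
        rfl
    rw [this, hK]
    omega
  · rintro ⟨m, f, hm, hfS, harc, hcyc⟩
    have hdec : ∀ j < m, (f (j + 1)).1 < (f j).1 := by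
      intro j hj
      obtain ⟨t, ht, v, hv, r, hr, h2, h1⟩ := harc j hj
      obtain ⟨hb1, hb2⟩ := (hS _).1 (hfS (j + 1) (by omega))
      rw [h2] at hb2
      rw [mem_Icc] at ht hv hr hb2
      have hk1 := (hS _).1 (hfS j (by omega))
      have hk := mem_Icc.1 hk1.2
      have hlow : c t ≤ ∑ j ∈ Icc 1 v, a (angMod ((i : ℤ) + (t : ℤ) - (j : ℤ)) i) := by
        have := single_le_sum (f := fun j : ℕ => a (angMod ((i : ℤ) + (t : ℤ) - (j : ℤ)) i))
          (fun _ _ => Nat.zero_le _) (mem_Icc.2 ⟨le_rfl, hv.1⟩ : 1 ∈ Icc 1 v)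
        simpa [hc] using this
      have hup := sum_part i t v hi (by omega) a
      rw [← hA] at hup
      have hd := (angMod_spec ((((f j).1 : ℕ) : ℤ) + (∑ j ∈ Finset.Icc 1 v, (a (angMod ((i : ℤ) + (t : ℤ) - (j : ℤ)) i) : ℤ))
        + ((v : ℤ) - 1) * (L : ℤ) + (r : ℤ)) K (by omega)).2.2
      rw [← h1, ← Nat.cast_sum] at hd
      set s := ∑ j ∈ Icc 1 v, a (angMod ((i : ℤ) + (t : ℤ) - (j : ℤ)) i)
      obtain ⟨w, rfl⟩ : ∃ w, v = w + 1 := ⟨v - 1, by omega⟩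
      have hmul : (w + 1) * L ≤ (i - 1) * L := Nat.mul_le_mul_right L hv.2
      have hmul' : (w + 1) * L = w * L + L := by ring
      have hd' : (K : ℤ) ∣ ((f (j + 1)).1 : ℤ) - ((f j).1 : ℤ) - ((s + w * L + r : ℕ) : ℤ) := by
        convert hd using 1
        push_cast
        ring
      by_contra hlt
      have hz := Int.eq_zero_of_abs_lt_dvd hd' (by
        rw [abs_lt]
        constructor <;> omega)
      omega
    have hind : ∀ j ≤ m, (f j).1 + j ≤ (f 0).1 := by
      intro j
      induction j with
      | zero => intro _; simp
      | succ n ih =>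
        intro hn
        have := ih (by omega)
        have := hdec n (by omega)
        omega
    have := hind m le_rfl
    rw [hcyc] at this
    omega
end

section
/- Let L ≥ 1 and nonnegative integers a_1, a_2 be given, set K = L + a_1 + a_2 + 1 and p = a_1 + a_2 + 2, and suppose p divides K. Color the nodes of the (a_2,a_1)_L-bar-ICP (the case i = 2) by assigning node (k,1) the color <k>_p and node (k,2) the color <k + a_2 + 1>_p, for all k ∈ [K] (so every color appears exactly K/p times in each column). Then this coloring is proper: whenever two distinct nodes receive the same color, each is a side-information node of the other. -/
open Finset

theorem angMod_eq_of (x : ℤ) (K b : ℕ) (h1 : 1 ≤ b) (h2 : b ≤ K) (c : ℤ)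
    (h : x = b + K * c) : b = angMod x K := by
  unfold angMod
  subst h
  rw [Int.add_mul_emod_self_left]
  rcases Nat.lt_or_ge b K with hb | hb
  · rw [Int.emod_eq_of_lt (by omega) (by omega)]
    split_ifs <;> omega
  · have : b = K := by omega
    subst this
    simp

theorem dvd_of_angMod_eq (x y : ℤ) (p : ℕ) (hp : 0 < p) (h : angMod x p = angMod y p) :
    ∃ q : ℤ, x - y = p * q := by
  have hx := Int.emod_nonneg x (b := (p : ℤ)) (by omega)
  have hy := Int.emod_nonneg y (b := (p : ℤ)) (by omega)
  have hx2 := Int.emod_lt_of_pos x (b := (p : ℤ)) (by omega)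
  have hy2 := Int.emod_lt_of_pos y (b := (p : ℤ)) (by omega)
  have e : x % p = y % p := by
    unfold angMod at h
    split_ifs at h <;> omega
  exact Int.ModEq.dvd (n := (p : ℤ)) (a := y) (b := x) e.symm

/-- Residue bounds: if `x = y + p q`, `0 ≤ y < p`, `0 ≤ x < p m`, then `y ≤ x ≤ p m - p + y`. -/
theorem residue_bounds (x y p m q : ℤ) (hx : x = y + p * q) (hy : 0 ≤ y) (hyp : y < p)
    (hx0 : 0 ≤ x) (hxK : x < p * m) : y ≤ x ∧ x ≤ p * m - p + y := by
  have hp : 0 < p := by omega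
  have hq : 0 ≤ q := by
    by_contra hc
    have : q ≤ -1 := by omega
    nlinarith
  have hqm : q + 1 ≤ m := by
    by_contra hc
    have : m ≤ q := by omega
    nlinarith
  constructor <;> nlinarith

theorem mem_known (K L : ℕ) (a : ℕ → ℕ) (k b t s : ℕ)
    (hts : (t = 1 ∧ s = a 2) ∨ (t = 2 ∧ s = a 1)) (hb1 : 1 ≤ b) (hb2 : b ≤ K) (c d : ℤ)
    (hd : d = (b : ℤ) - k + K * c) (h1 : (s : ℤ) + 1 ≤ d) (h2 : d ≤ s + L) :
    (b, t) ∈ knownIdx K 2 L a k := by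
  refine ⟨t, ?_, 1, by simp, (d - s).toNat, ?_, rfl, ?_⟩
  · rw [Finset.mem_Icc]; omega
  · rw [Finset.mem_Icc]; omega
  · have hs : (a (angMod (((2 : ℕ) : ℤ) + (t : ℤ) - ((1 : ℕ) : ℤ)) 2) : ℤ) = s := by
      rcases hts with ⟨rfl, rfl⟩ | ⟨rfl, rfl⟩ <;> simp [angMod]
    apply angMod_eq_of _ K b hb1 hb2 c
    rw [Finset.Icc_self, Finset.sum_singleton, hs]
    push_cast
    rw [Int.toNat_of_nonneg (by omega)]
    linarith

/-- One direction of the membership, from the congruence of the colors. -/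
theorem mem_of_cong (K L p : ℕ) (a : ℕ → ℕ) (hK : K = L + a 1 + a 2 + 1)
    (hp : p = a 1 + a 2 + 2) (hdvd : p ∣ K) (k b t s y : ℕ)
    (hts : (t = 1 ∧ s = a 2) ∨ (t = 2 ∧ s = a 1))
    (hk1 : 1 ≤ k) (hk2 : k ≤ K) (hb1 : 1 ≤ b) (hb2 : b ≤ K)
    (hy : (y = s + 1) ∨ (y = 0 ∧ b ≠ k)) (q : ℤ) (hq : (b : ℤ) - k = y + p * q) :
    (b, t) ∈ knownIdx K 2 L a k := by
  obtain ⟨m, hm⟩ := hdvd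
  have hm' : (K : ℤ) = p * m := by rw [hm]; push_cast; rfl
  obtain ⟨c, d, hd, hd0, hdK, hdq, hdn⟩ : ∃ c d : ℤ, d = (b : ℤ) - k + K * c ∧ 0 ≤ d ∧ d < K ∧
      d = y + p * (q + m * c) ∧ (b ≠ k → d ≠ 0) := by
    by_cases h : k ≤ b
    · exact ⟨0, b - k, by ring, by omega, by omega, by rw [hq]; ring, by omega⟩
    · exact ⟨1, b - k + K, by ring, by omega, by omega, by rw [hq, hm']; ring, by omega⟩
  have hB := residue_bounds d y p m _ hdq (by omega) (by omega) hd0 (by omega)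
  rw [← hm'] at hB
  refine mem_known K L a k b t s hts hb1 hb2 c d hd ?_ ?_
  · rcases hy with hy | ⟨hy, hne⟩
    · omega
    · have hB2 := residue_bounds (d - 1) (p - 1) p m (q + m * c - 1)
        (by rw [hdq, hy]; push_cast; ring) (by omega) (by omega)
        (by have := hdn hne; omega) (by omega)
      omega
  · omega

/-- for the `(a_2,a_1)_L`-bar-ICP (the case `i = 2`) with
`p = a_1 + a_2 + 2` dividing `K`, the coloring assigning node `(k,1)` the color
`<k>_p` and node `(k,2)` the color `<k+a_2+1>_p` is proper: two distinct nodes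
receiving the same color are side-information nodes of each other. -/
theorem stmt10 (L : ℕ) (hL : 1 ≤ L) (a : ℕ → ℕ)
    (K p : ℕ) (hK : K = L + a 1 + a 2 + 1) (hp : p = a 1 + a 2 + 2) (hdvd : p ∣ K)
    (col : ℕ × ℕ → ℕ)
    (hcol1 : ∀ k, col (k, 1) = angMod (k : ℤ) p)
    (hcol2 : ∀ k, col (k, 2) = angMod ((k : ℤ) + (a 2 : ℤ) + 1) p)
    (k₁ t₁ k₂ t₂ : ℕ)
    (hk₁ : k₁ ∈ Finset.Icc 1 K) (ht₁ : t₁ ∈ Finset.Icc 1 2)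
    (hk₂ : k₂ ∈ Finset.Icc 1 K) (ht₂ : t₂ ∈ Finset.Icc 1 2)
    (hne : (k₁, t₁) ≠ (k₂, t₂)) (hsame : col (k₁, t₁) = col (k₂, t₂)) :
    (k₂, t₂) ∈ knownIdx K 2 L a k₁ ∧ (k₁, t₁) ∈ knownIdx K 2 L a k₂ := by
  rw [Finset.mem_Icc] at hk₁ hk₂ ht₁ ht₂
  have hp0 : 0 < p := by omega
  obtain ⟨hk₁, hk₁'⟩ := hk₁
  obtain ⟨hk₂, hk₂'⟩ := hk₂
  have c1 : t₁ = 1 ∨ t₁ = 2 := by omega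
  have c2 : t₂ = 1 ∨ t₂ = 2 := by omega
  rcases c1 with rfl | rfl <;> rcases c2 with rfl | rfl
  · have hn : k₁ ≠ k₂ := fun h => hne (by rw [h])
    rw [hcol1, hcol1] at hsame
    obtain ⟨q, hq⟩ := dvd_of_angMod_eq _ _ p hp0 hsame
    exact ⟨mem_of_cong K L p a hK hp hdvd k₁ k₂ 1 (a 2) 0 (by simp) hk₁ hk₁' hk₂ hk₂'
        (Or.inr ⟨rfl, hn.symm⟩) (-q) (by push_cast; linarith),
      mem_of_cong K L p a hK hp hdvd k₂ k₁ 1 (a 2) 0 (by simp) hk₂ hk₂' hk₁ hk₁'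
        (Or.inr ⟨rfl, hn⟩) q (by push_cast; linarith)⟩
  · rw [hcol1, hcol2] at hsame
    obtain ⟨q, hq⟩ := dvd_of_angMod_eq _ _ p hp0 hsame
    have hpz : (p : ℤ) = a 1 + a 2 + 2 := by rw [hp]; push_cast; ring
    exact ⟨mem_of_cong K L p a hK hp hdvd k₁ k₂ 2 (a 1) (a 1 + 1) (by simp) hk₁ hk₁' hk₂ hk₂'
        (Or.inl rfl) (-q - 1) (by push_cast; linarith),
      mem_of_cong K L p a hK hp hdvd k₂ k₁ 1 (a 2) (a 2 + 1) (by simp) hk₂ hk₂' hk₁ hk₁'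
        (Or.inl rfl) q (by push_cast; linarith)⟩
  · rw [hcol1, hcol2] at hsame
    obtain ⟨q, hq⟩ := dvd_of_angMod_eq _ _ p hp0 hsame
    have hpz : (p : ℤ) = a 1 + a 2 + 2 := by rw [hp]; push_cast; ring
    exact ⟨mem_of_cong K L p a hK hp hdvd k₁ k₂ 1 (a 2) (a 2 + 1) (by simp) hk₁ hk₁' hk₂ hk₂'
        (Or.inl rfl) (-q) (by push_cast; linarith),
      mem_of_cong K L p a hK hp hdvd k₂ k₁ 2 (a 1) (a 1 + 1) (by simp) hk₂ hk₂' hk₁ hk₁'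
        (Or.inl rfl) (q - 1) (by push_cast; linarith)⟩
  · have hn : k₁ ≠ k₂ := fun h => hne (by rw [h])
    rw [hcol2, hcol2] at hsame
    obtain ⟨q, hq⟩ := dvd_of_angMod_eq _ _ p hp0 hsame
    exact ⟨mem_of_cong K L p a hK hp hdvd k₁ k₂ 2 (a 1) 0 (by simp) hk₁ hk₁' hk₂ hk₂'
        (Or.inr ⟨rfl, hn.symm⟩) (-q) (by push_cast; linarith),
      mem_of_cong K L p a hK hp hdvd k₂ k₁ 2 (a 1) 0 (by simp) hk₂ hk₂' hk₁ hk₁'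
        (Or.inr ⟨rfl, hn⟩) q (by push_cast; linarith)⟩
end

section
/- Consider the (1,1,1)_2-ICP: a single unicast index coding problem with 8 messages x_1,…,x_8 and 8 users, in which user k demands x_k and knows the side-information set K_k = { <k+2>_8, <k+3>_8, <k+5>_8, <k+6>_8 }. Then the optimal broadcast rate R* of this ICP satisfies R* ≤ 8/3. -/
open Finset

/-- Users (= message indices) of a single unicast ICP with `n` users: `[n]`. -/
abbrev Usr (n : ℕ) : Type := {k : ℕ // k ∈ Finset.Icc 1 n}

/-- Want sets of the `(1,1,1)_2`-ICP: user `k` demands message `k`. -/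
def icpW : Usr 8 → Set (Usr 8) := fun u => {x | x.1 = u.1}

/-- Known sets of the `(1,1,1)_2`-ICP: user `k` knows messages
`<k+2>_8, <k+3>_8, <k+5>_8, <k+6>_8`. -/
def icpK : Usr 8 → Set (Usr 8) := fun u =>
  {x | x.1 = angMod ((u.1 : ℤ) + 2) 8 ∨ x.1 = angMod ((u.1 : ℤ) + 3) 8 ∨
       x.1 = angMod ((u.1 : ℤ) + 5) 8 ∨ x.1 = angMod ((u.1 : ℤ) + 6) 8}

/-- The user with number `j + 1`. -/
def usrOf (j : Fin 8) : Usr 8 := ⟨j.1 + 1, by simp only [Finset.mem_Icc]; omega⟩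

/-- Transmit, for each `j`, the sum over the clique `{j, j+2, j+5}`. -/
def encMap (x : Usr 8 → Fin 3 → Bool) (j : Fin 8) : Bool :=
  xor (x (usrOf j) 0) (xor (x (usrOf (j + 2)) 1) (x (usrOf (j + 5)) 2))

lemma usrOf_surj (u : Usr 8) : ∃ j, u = usrOf j := by
  obtain ⟨k, hk⟩ := u
  have h := Finset.mem_Icc.1 hk
  refine ⟨⟨k - 1, by omega⟩, Subtype.ext ?_⟩
  simp only [usrOf]
  omega

lemma known_mem (j : Fin 8) : usrOf (j + 2) ∈ icpK (usrOf j) ∧ usrOf (j + 3) ∈ icpK (usrOf j) ∧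
    usrOf (j + 5) ∈ icpK (usrOf j) ∧ usrOf (j + 6) ∈ icpK (usrOf j) := by
  simp only [icpK, Set.mem_ofPred_eq]
  revert j
  decide

lemma enc_inj (x x' : Usr 8 → Fin 3 → Bool) (hE : encMap x = encMap x') (j : Fin 8)
    (hK : ∀ m ∈ icpK (usrOf j), x m = x' m) : x (usrOf j) = x' (usrOf j) := by
  obtain ⟨h2, h3, h5, h6⟩ := known_mem j
  have e2 := hK _ h2
  have e3 := hK _ h3
  have e5 := hK _ h5
  have e6 := hK _ h6
  have y0 := congrFun hE j
  have y1 := congrFun hE (j + 6)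
  have y2 := congrFun hE (j + 3)
  have a1 : j + 6 + 2 = j := by clear * -; revert j; decide
  have a2 : j + 6 + 5 = j + 3 := by clear * -; revert j; decide
  have a3 : j + 3 + 2 = j + 5 := by clear * -; revert j; decide
  have a4 : j + 3 + 5 = j := by clear * -; revert j; decide
  simp only [encMap, a1, a2, a3, a4, e2, e3, e5, e6] at y0 y1 y2
  funext i
  fin_cases i
  · simpa using y0
  · simpa using y1
  · simpa using y2

lemma valid_code : ValidCode icpW icpK 3 8 := by
  classical
  refine ⟨encMap, fun u y z => if h : ∃ x : Usr 8 → Fin 3 → Bool,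
    encMap x = y ∧ (fun m : ↥(icpK u) => x m.1) = z then fun m => h.choose m.1
    else fun _ _ => false, ?_⟩
  intro x u
  have h : ∃ x' : Usr 8 → Fin 3 → Bool,
    encMap x' = encMap x ∧ (fun m : ↥(icpK u) => x' m.1) = fun m => x m.1 := ⟨x, rfl, rfl⟩
  beta_reduce
  rw [dif_pos h]
  obtain ⟨h1, h2⟩ := h.choose_spec
  funext m
  obtain ⟨m, hm⟩ := m
  have hmu : m = u := Subtype.ext hm
  subst hmu
  obtain ⟨j, rfl⟩ := usrOf_surj m
  exact enc_inj _ _ h1 j (fun m hm => congrFun h2 ⟨m, hm⟩)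

/-- Lemma 14 of the paper: the optimal broadcast rate of the
`(1,1,1)_2`-ICP is at most `8/3`. -/
theorem stmt12 : optRate icpW icpK ≤ 8 / 3 := by
  refine csInf_le ⟨0, ?_⟩ ⟨3, 8, by norm_num, valid_code, by norm_num⟩
  rintro _ ⟨t, l, -, -, rfl⟩
  positivity
end
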